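/- There is no homomorphism of additive monoids α : ℕ × ℕ → ℕ such that α(n, n) = n for all n ∈ ℕ and such that α(x) = 0 implies x = (0, 0). -/

import Mathlib

/-- There is no homomorphism of additive monoids `α : ℕ × ℕ → ℕ` which is a section of the
diagonal (`α (n, n) = n` for all `n`) and is local (`α x = 0` implies `x = (0, 0)`). -/
theorem stmt_13 :
    ¬ ∃ α : ℕ × ℕ →+ ℕ, (∀ n : ℕ, α (n, n) = n) ∧ ∀ x : ℕ × ℕ, α x = 0 → x = 0 := by
  rintro ⟨α, hsec, hloc⟩
  -- Locality forces `α (1, 0) ≥ 1` and `α (0, 1) ≥ 1`, but they sum to `α (1, 1) = 1`.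
  have h10 : α (1, 0) ≠ 0 := fun h => by simpa using hloc _ h
  have h01 : α (0, 1) ≠ 0 := fun h => by simpa using hloc _ h
  have hadd : α (1, 1) = α (1, 0) + α (0, 1) := map_add α (1, 0) (0, 1)
  have h11 := hsec 1
  omega
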